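/- arXiv:1607.04728 — 2 statements merged into one kernel-verified Lean document; each statement's English description precedes it below -/
import Mathlib

section
/- Let α ≥ 0 be a real number, k a positive integer, and L ⊆ A* a language such that L ⊆ S^k for some language S with p_S(n) = O(n^α). Then p_L(n) = O(n^{k(α+1)−1}). In particular, if x is an infinite word with Fac(x) ⊆ S^k for some S of bounded complexity, then p_x(n) = O(n^{k−1}). -/
open scoped ENNReal Pointwise

universe u

variable {A : Type u}

/-- The factor of `x` of length `n` starting at position `i`. -/
def wordSeg (x : ℕ → A) (i n : ℕ) : List A := (List.range n).map fun j => x (i + j)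

/-- The set of finite factors of a one-sided infinite word (including the empty word). -/
def Fac (x : ℕ → A) : Set (List A) := {u | ∃ i n, u = wordSeg x i n}

/-- The factor of a two-sided word `x` of length `n` starting at position `i`. -/
def wordSegZ (x : ℤ → A) (i : ℤ) (n : ℕ) : List A := (List.range n).map fun j => x (i + j)

/-- The set of finite factors of a two-sided infinite word (including the empty word). -/
def FacZ (x : ℤ → A) : Set (List A) := {u | ∃ (i : ℤ) (n : ℕ), u = wordSegZ x i n}

/-- The complexity of a language: the number of words of length `n` in it. -/
noncomputable def complexity (L : Set (List A)) (n : ℕ) : ℕ :=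
  {u ∈ L | u.length = n}.ncard

/-- The accumulative complexity `p*_L(n) = Σ_{i=0}^{n} p_L(i)`. -/
noncomputable def accComplexity (L : Set (List A)) (n : ℕ) : ℕ :=
  ∑ i ∈ Finset.range (n + 1), complexity L i

/-- Concatenation (product) of two languages. -/
def prodL (S T : Set (List A)) : Set (List A) := {w | ∃ s ∈ S, ∃ t ∈ T, w = s ++ t}

/-- `powL S k` = `S^k`, the set of concatenations of `k` elements of `S`. -/
def powL (S : Set (List A)) : ℕ → Set (List A)
  | 0 => {([] : List A)}
  | k + 1 => prodL (powL S k) S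

/-- `f(n) = O(n^α)`. -/
def PolyBound (f : ℕ → ℕ) (α : ℝ) : Prop :=
  ∃ C : ℝ, ∀ n : ℕ, 1 ≤ n → (f n : ℝ) ≤ C * (n : ℝ) ^ α

/-- The `α`-dimension `d_α(L)`: infimum of the integers `k ≥ 1` such that `L ⊆ S^k`
for some language `S` with `p_S(n) = O(n^α)`, with `inf ∅ = ⊤`. -/
noncomputable def polyDim (α : ℝ) (L : Set (List A)) : ℕ∞ :=
  sInf {k : ℕ∞ | ∃ m : ℕ, k = m ∧ 1 ≤ m ∧
    ∃ S : Set (List A), PolyBound (complexity S) α ∧ L ⊆ powL S m}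

/-- The accumulative `α`-dimension `d*_α(L)`. -/
noncomputable def polyDimStar (α : ℝ) (L : Set (List A)) : ℕ∞ :=
  sInf {k : ℕ∞ | ∃ m : ℕ, k = m ∧ 1 ≤ m ∧
    ∃ S : Set (List A), PolyBound (accComplexity S) α ∧ L ⊆ powL S m}

/-- The cost `c(L)`: infimum of the `α ≥ 0` with `d_α(L) < +∞`, with `inf ∅ = ⊤`. -/
noncomputable def cost (L : Set (List A)) : ℝ≥0∞ :=
  sInf {a : ℝ≥0∞ | ∃ α : ℝ, 0 ≤ α ∧ a = ENNReal.ofReal α ∧ polyDim α L ≠ ⊤}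

/-- A one-sided word is ultimately periodic if it is of the form `u v v v ⋯`. -/
def UltimatelyPeriodic (x : ℕ → A) : Prop :=
  ∃ N p : ℕ, 0 < p ∧ ∀ n : ℕ, N ≤ n → x (n + p) = x n

/-- A two-sided word is eventually periodic if it is periodic far enough to the right
and far enough to the left. -/
def EventuallyPeriodicZ (x : ℤ → A) : Prop :=
  (∃ p : ℕ, 0 < p ∧ ∃ N : ℤ, ∀ n : ℤ, N ≤ n → x (n + p) = x n) ∧
  (∃ p : ℕ, 0 < p ∧ ∃ N : ℤ, ∀ n : ℤ, n ≤ N → x (n - p) = x n)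

/-- A one-sided word is recurrent if each of its factors occurs infinitely often. -/
def Recurrent (x : ℕ → A) : Prop :=
  ∀ u ∈ Fac x, ∀ N : ℕ, ∃ i : ℕ, N ≤ i ∧ u = wordSeg x i u.length

/-- `u` is a right special factor for the language `F`. -/
def RightSpecial (F : Set (List A)) (u : List A) : Prop :=
  u ∈ F ∧ ∃ a b : A, a ≠ b ∧ u ++ [a] ∈ F ∧ u ++ [b] ∈ F

/-- `M` is a `D`-marker set for a word with factor set `F`: every factor of length
at least `D n` contains a factor of length `n` belonging to `M`. -/
def MarkerSet (D : ℕ) (M F : Set (List A)) : Prop :=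
  ∀ n : ℕ, 1 ≤ n → ∀ u ∈ F, D * n ≤ u.length →
    ∃ v ∈ M, v.length = n ∧ v <:+: u

/-- A language is factorial if it contains all factors of its members. -/
def IsFactorial (S : Set (List A)) : Prop := ∀ u ∈ S, ∀ v : List A, v <:+: u → v ∈ S

/-- The bound `Σ_{k ∈ I_n ∩ ℕ} p_M(2^k)(1 + 4 p(3n)/2^k)` where
`I_n = (log₂(n/(2D)), log₂(2n)]`, i.e. the sum is over natural `k` with
`n/(2D) < 2^k ≤ 2n`. -/
noncomputable def markerBound (M F : Set (List A)) (D n : ℕ) : ℝ :=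
  ∑ k ∈ (Finset.range (2 * n + 2)).filter (fun k => n < 2 * D * 2 ^ k ∧ 2 ^ k ≤ 2 * n),
    (complexity M (2 ^ k) : ℝ) * (1 + 4 * (complexity F (3 * n) : ℝ) / 2 ^ k)

-- The word `u = ∏_{i=1}^{∞} a b^i = a b a b b a b b b ⋯` over `{a,b}`, with
-- `a = false`, `b = true`: position `n` carries an `a` iff `n = (i-1)(i+2)/2` for some
-- `i ≥ 1`, i.e. iff `2n = m(m+3)` for some `m ≥ 0`.
open Classical in
noncomputable def uWord (n : ℕ) : Bool :=
  if ∃ m : ℕ, 2 * n = m * (m + 3) then false else true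

theorem finite_len {A : Type u} [Finite A] (S : Set (List A)) (n : ℕ) :
    {u ∈ S | u.length = n}.Finite :=
  (List.finite_length_eq A n).subset fun _ hu => hu.2

theorem complexity_mono {A : Type u} [Finite A] {S T : Set (List A)} (h : S ⊆ T) (n : ℕ) :
    complexity S n ≤ complexity T n :=
  Set.ncard_le_ncard (fun _ hu => ⟨h hu.1, hu.2⟩) (finite_len T n)

theorem complexity_prodL {A : Type u} [Finite A] (S T : Set (List A)) (n : ℕ) :
    complexity (prodL S T) n ≤
      ∑ i ∈ Finset.range (n + 1), complexity S i * complexity T (n - i) := by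
  have key : {u ∈ prodL S T | u.length = n} ⊆ ⋃ i ∈ Finset.range (n + 1),
      (fun p : List A × List A => p.1 ++ p.2) ''
        ({u ∈ S | u.length = i} ×ˢ {u ∈ T | u.length = n - i}) := by
    rintro u ⟨⟨s, hs, t, ht, rfl⟩, hlen⟩
    rw [List.length_append] at hlen
    simp only [Set.mem_iUnion, Finset.mem_range]
    exact ⟨s.length, by omega, (s, t), ⟨⟨hs, rfl⟩, ⟨ht, by show t.length = n - s.length; omega⟩⟩, rfl⟩
  have hfin : ∀ i, ({u ∈ S | u.length = i} ×ˢ {u ∈ T | u.length = n - i}).Finite :=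
    fun i => (finite_len S i).prod (finite_len T (n - i))
  calc complexity (prodL S T) n ≤ _ := Set.ncard_le_ncard key
        (Set.Finite.biUnion (Finset.finite_toSet _) fun i _ => (hfin i).image _)
    _ ≤ _ := Finset.set_ncard_biUnion_le _ _
    _ ≤ _ := Finset.sum_le_sum fun i _ => by
        refine (Set.ncard_image_le (hfin i)).trans ?_
        rw [Set.ncard_prod]
        exact le_rfl

theorem powL_bound {A : Type u} [Finite A] {α : ℝ} (hα : 0 ≤ α) {S : Set (List A)} {C : ℝ}
    (hC : 0 ≤ C) (h : ∀ n : ℕ, (complexity S n : ℝ) ≤ C * ((n : ℝ) + 1) ^ α) (k : ℕ) :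
    ∀ n : ℕ, (complexity (powL S (k + 1)) n : ℝ) ≤
      C ^ (k + 1) * ((n : ℝ) + 1) ^ (((k : ℝ) + 1) * (α + 1) - 1) := by
  induction k with
  | zero =>
    intro n
    have hs : powL S (0 + 1) ⊆ S := by
      rintro u ⟨s, hs, t, ht, rfl⟩
      have hs' : s = [] := hs
      subst hs'
      simpa using ht
    have := complexity_mono hs n
    calc (complexity (powL S (0 + 1)) n : ℝ) ≤ complexity S n := by exact_mod_cast this
      _ ≤ _ := h n
      _ = _ := by simp
  | succ k ih =>
    intro n
    have hn : (0 : ℝ) < (n : ℝ) + 1 := by positivity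
    have hβ : 0 ≤ ((k : ℝ) + 1) * (α + 1) - 1 := by
      have : (0 : ℝ) ≤ k := by positivity
      nlinarith [mul_nonneg this hα]
    have h1 : (complexity (powL S (k + 1 + 1)) n : ℝ) ≤
        ∑ i ∈ Finset.range (n + 1),
          (complexity (powL S (k + 1)) i : ℝ) * (complexity S (n - i) : ℝ) := by
      exact_mod_cast complexity_prodL (powL S (k + 1)) S n
    refine h1.trans ?_
    have h2 : ∀ i ∈ Finset.range (n + 1),
        (complexity (powL S (k + 1)) i : ℝ) * (complexity S (n - i) : ℝ) ≤
        (C ^ (k + 1) * ((n : ℝ) + 1) ^ (((k : ℝ) + 1) * (α + 1) - 1)) *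
          (C * ((n : ℝ) + 1) ^ α) := by
      intro i hi
      have hi' : (i : ℝ) ≤ n := by
        exact_mod_cast Nat.lt_succ_iff.mp (Finset.mem_range.mp hi)
      have hj : ((n - i : ℕ) : ℝ) ≤ n := by exact_mod_cast Nat.sub_le n i
      refine mul_le_mul ((ih i).trans ?_) ((h (n - i)).trans ?_) (by positivity) (by positivity)
      · gcongr
      · gcongr
    refine (Finset.sum_le_sum h2).trans (le_of_eq ?_)
    rw [Finset.sum_const, Finset.card_range, nsmul_eq_mul]
    have e : (((k + 1 : ℕ) : ℝ) + 1) * (α + 1) - 1 =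
        1 + ((((k : ℝ) + 1) * (α + 1) - 1) + α) := by push_cast; ring
    rw [e, Real.rpow_add hn, Real.rpow_add hn, Real.rpow_one]
    push_cast
    ring

theorem main_bound {A : Type u} [Finite A] {α : ℝ} (hα : 0 ≤ α) {k : ℕ} (hk : 1 ≤ k)
    {L S : Set (List A)} (h : PolyBound (complexity S) α) (hL : L ⊆ powL S k) :
    PolyBound (complexity L) ((k : ℝ) * (α + 1) - 1) := by
  obtain ⟨C, hC⟩ := h
  obtain ⟨k, rfl⟩ : ∃ m, k = m + 1 := ⟨k - 1, by omega⟩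
  set D : ℝ := max C (complexity S 0) with hD
  have hD0 : 0 ≤ D := le_max_of_le_right (by positivity)
  have hS : ∀ n : ℕ, (complexity S n : ℝ) ≤ D * ((n : ℝ) + 1) ^ α := by
    intro n
    rcases Nat.eq_zero_or_pos n with rfl | hn
    · simp [hD]
    · refine (hC n hn).trans ?_
      have : (n : ℝ) ≤ n + 1 := by linarith
      exact mul_le_mul (le_max_left _ _) (Real.rpow_le_rpow (by positivity) this hα)
        (by positivity) hD0
  have hβ : 0 ≤ ((k : ℝ) + 1) * (α + 1) - 1 := by
    have : (0 : ℝ) ≤ k := by positivity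
    nlinarith [mul_nonneg this hα]
  refine ⟨D ^ (k + 1) * 2 ^ (((k : ℝ) + 1) * (α + 1) - 1), fun n hn => ?_⟩
  have hn' : (1 : ℝ) ≤ n := by exact_mod_cast hn
  have hm : (complexity L n : ℝ) ≤ complexity (powL S (k + 1)) n := by
    exact_mod_cast complexity_mono hL n
  refine (hm.trans (powL_bound hα hD0 hS k n)).trans ?_
  push_cast
  rw [mul_assoc, ← Real.mul_rpow (by norm_num) (by positivity)]
  gcongr
  linarith

/-- if `L ⊆ S^k` with `p_S(n) = O(n^α)` then `p_L(n) = O(n^{k(α+1)-1})`;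
in particular if `Fac(x) ⊆ S^k` with `S` of bounded complexity then
`p_x(n) = O(n^{k-1})`. -/
theorem stmt6 :
    (∀ (A : Type u) [Fintype A] [Nonempty A] (α : ℝ), 0 ≤ α → ∀ k : ℕ, 1 ≤ k →
      ∀ L S : Set (List A), PolyBound (complexity S) α → L ⊆ powL S k →
        PolyBound (complexity L) ((k : ℝ) * (α + 1) - 1)) ∧
    (∀ (A : Type u) [Fintype A] [Nonempty A] (x : ℕ → A) (k : ℕ), 1 ≤ k →
      ∀ S : Set (List A), (∃ C : ℕ, ∀ n : ℕ, complexity S n ≤ C) → Fac x ⊆ powL S k →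
        PolyBound (complexity (Fac x)) ((k : ℝ) - 1)) := by
  refine ⟨fun A _ _ α hα k hk L S h hL => main_bound hα hk h hL, ?_⟩
  rintro A _ _ x k hk S ⟨C, hC⟩ hx
  have h : PolyBound (complexity S) 0 := ⟨C, fun n _ => by
    simpa using hC n⟩
  simpa using main_bound le_rfl hk h hx
end

section
/- Let x be a one-sided infinite word over A and suppose Fac(x) ⊆ S^k for some factorial language S ⊆ A* and some positive integer k. Then there exists a suffix y of x such that Fac(y) ⊆ S. In particular, if p_S(n) = O(n^α) for some α ≥ 0, then p_x(n) = O(n^α). -/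
open scoped ENNReal Pointwise

universe u

variable {A : Type u}

theorem wordSeg_length (x : ℕ → A) (i n : ℕ) : (wordSeg x i n).length = n := by
  simp [wordSeg]

theorem wordSeg_add (x : ℕ → A) (i a b : ℕ) :
    wordSeg x i (a + b) = wordSeg x i a ++ wordSeg x (i + a) b := by
  simp [wordSeg, List.range_add, Function.comp_def, Nat.add_assoc]

theorem wordSeg_shift (x : ℕ → A) (m i n : ℕ) :
    wordSeg (fun n => x (n + m)) i n = wordSeg x (i + m) n := by
  simp only [wordSeg]
  apply List.map_congr_left
  intro j _
  congr 1
  omega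

theorem exists_not_mem_powL (x : ℕ → A) (S : Set (List A)) (hS : IsFactorial S)
    (hbad : ∀ m : ℕ, ∃ i l, m ≤ i ∧ wordSeg x i l ∉ S) (k : ℕ) :
    ∃ N, ∀ n, N ≤ n → wordSeg x 0 n ∉ powL S k := by
  induction k with
  | zero =>
    refine ⟨1, fun n hn h => ?_⟩
    have h1 : wordSeg x 0 n = [] := h
    have h2 := wordSeg_length x 0 n
    rw [h1] at h2
    simp at h2
    omega
  | succ k ih =>
    obtain ⟨N, hN⟩ := ih
    obtain ⟨i, l, hi, hl⟩ := hbad N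
    refine ⟨i + l, fun n hn h => ?_⟩
    obtain ⟨s, hs, t, ht, hst⟩ := h
    have hlen : n = s.length + t.length := by
      rw [← wordSeg_length x 0 n, hst, List.length_append]
    rw [hlen, wordSeg_add] at hst
    obtain ⟨e1, e2⟩ := List.append_inj hst (wordSeg_length _ _ _)
    have hsN : s.length < N := by
      by_contra hc
      exact hN _ (not_lt.mp hc) (by rw [e1]; exact hs)
    apply hl
    refine hS t ht _ ?_
    obtain ⟨a, ha⟩ : ∃ a, i = s.length + a := ⟨i - s.length, by omega⟩
    obtain ⟨b, hb⟩ : ∃ b, t.length = a + l + b := ⟨t.length - (a + l), by omega⟩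
    rw [hb, wordSeg_add, wordSeg_add, Nat.zero_add, ← ha] at e2
    exact ⟨_, _, e2⟩

/-- if `Fac(x) ⊆ S^k` for a factorial language `S`, then some suffix `y`
of `x` satisfies `Fac(y) ⊆ S`; in particular `p_S(n) = O(n^α)` implies
`p_x(n) = O(n^α)`. -/
theorem stmt9 (A : Type u) [Fintype A] [Nonempty A] (x : ℕ → A) (S : Set (List A))
    (hS : IsFactorial S) (k : ℕ) (hk : 1 ≤ k) (h : Fac x ⊆ powL S k) :
    (∃ m : ℕ, Fac (fun n => x (n + m)) ⊆ S) ∧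
    (∀ α : ℝ, 0 ≤ α → PolyBound (complexity S) α →
      PolyBound (complexity (Fac x)) α) := by
  have h1 : ∃ m : ℕ, Fac (fun n => x (n + m)) ⊆ S := by
    by_contra hc
    push Not at hc
    obtain ⟨N, hN⟩ := exists_not_mem_powL x S hS (fun m => by
      obtain ⟨u, ⟨i, n, rfl⟩, hu⟩ := Set.not_subset.mp (hc m)
      rw [wordSeg_shift] at hu
      exact ⟨i + m, n, by omega, hu⟩) k
    exact hN N le_rfl (h ⟨0, N, rfl⟩)
  refine ⟨h1, ?_⟩
  rintro α hα ⟨C, hC⟩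
  obtain ⟨m, hm⟩ := h1
  refine ⟨C + m, fun n hn => ?_⟩
  classical
  have hsub : {u ∈ Fac x | u.length = n} ⊆
      {u ∈ S | u.length = n} ∪ ((Finset.range m).image (fun i => wordSeg x i n) :
        Finset (List A)) := by
    rintro u ⟨⟨i, n', rfl⟩, hu⟩
    rw [wordSeg_length] at hu
    subst hu
    by_cases him : i < m
    · right
      simp only [Finset.coe_image, Set.mem_image, Finset.mem_coe, Finset.mem_range]
      exact ⟨i, him, rfl⟩
    · left
      refine ⟨hm ⟨i - m, n', ?_⟩, wordSeg_length _ _ _⟩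
      rw [wordSeg_shift, Nat.sub_add_cancel (not_lt.mp him)]
  have hfin : {u ∈ S | u.length = n}.Finite :=
    (List.finite_length_eq A n).subset fun u hu => hu.2
  have hle : complexity (Fac x) n ≤ complexity S n + m := by
    unfold complexity
    refine (Set.ncard_le_ncard hsub (hfin.union (Finset.finite_toSet _))).trans ?_
    refine (Set.ncard_union_le _ _).trans ?_
    rw [Set.ncard_coe_finset]
    exact Nat.add_le_add_left (Finset.card_image_le.trans (by simp)) _
  have hle' : (complexity (Fac x) n : ℝ) ≤ complexity S n + m := by exact_mod_cast hle
  have hpow : (1 : ℝ) ≤ (n : ℝ) ^ α := Real.one_le_rpow (by exact_mod_cast hn) hα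
  have hm0 : (0 : ℝ) ≤ m := Nat.cast_nonneg m
  nlinarith [hC n hn, mul_le_mul_of_nonneg_left hpow hm0]
end
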